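/- arXiv:0901.1853 — 2 statements merged into one kernel-verified Lean document; each statement's English description precedes it below -/
import Mathlib

section
/- For every crossover fraction p ∈ (0, 1/2), every rate R ≥ 0 that is weakly achievable by deterministic codes against causal adversaries with power p satisfies R ≤ min{1 − H(p), max(1 − 4p, 0)}. (Theorem 1: the weak capacity of the binary causal-adversary channel with deterministic encoders is at most min{1 − H(p), (1 − 4p)^+}.) -/
open Finset

/-- The prefix `(x_1, …, x_{i+1})` (0-indexed: `x_0, …, x_i`) of a word `x : Fin n → Bool`. -/
def wordPrefix {n : ℕ} (x : Fin n → Bool) (i : Fin n) : Fin (i.1 + 1) → Bool :=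
  fun k => x ⟨k.1, lt_of_le_of_lt (Nat.lt_succ_iff.mp k.isLt) i.isLt⟩

/-- A causal adversary with power `p` on block length `n`: a (finite) jamming random
variable `J` with distribution `μ`, and for each position `i` a jamming function `g i`
depending only on the prefix `(x_1, …, x_i)` of the transmitted word and on `J`, flipping
at most `p * n` bits in total. -/
structure CausalAdversary (n : ℕ) (p : ℝ) where
  J : Type
  [instJ : Fintype J]
  μ : J → ℝ
  μ_nonneg : ∀ j, 0 ≤ μ j
  μ_sum : ∑ j, μ j = 1
  g : (i : Fin n) → (Fin (i.1 + 1) → Bool) → J → Bool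
  power : ∀ (x : Fin n → Bool) (j : J),
    (((univ : Finset (Fin n)).filter (fun i => g i (wordPrefix x i) j = true)).card : ℝ) ≤ p * n

attribute [instance] CausalAdversary.instJ

/-- The word received by Bob when Alice transmits `x` and the adversary's randomness is `j`:
`y_i = x_i XOR g_i((x_1,…,x_i), j)`. -/
def CausalAdversary.received {n : ℕ} {p : ℝ} (A : CausalAdversary n p)
    (x : Fin n → Bool) (j : A.J) : Fin n → Bool :=
  fun i => xor (x i) (A.g i (wordPrefix x i) j)

/-- The number of messages of a deterministic `(n, R n)`-code: `⌈2^{R n}⌉`. -/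
noncomputable def numMessages (n : ℕ) (R : ℝ) : ℕ := ⌈(2 : ℝ) ^ (R * n)⌉₊

/-- A deterministic `(n, R n)`-code: an injective encoder on the message set
`{1, …, ⌈2^{Rn}⌉}` together with a possibly randomized decoder (given by, for each received
word `y`, a probability distribution `dec y` on the messages). -/
structure DetCode (n : ℕ) (R : ℝ) where
  enc : Fin (numMessages n R) → (Fin n → Bool)
  enc_inj : Function.Injective enc
  dec : (Fin n → Bool) → Fin (numMessages n R) → ℝ
  dec_nonneg : ∀ y u, 0 ≤ dec y u
  dec_sum : ∀ y, ∑ u, dec y u = 1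

/-- The probability of error of a deterministic code against a causal adversary: the
probability, over a uniformly random message `u`, the adversary's randomness, and the
decoder's randomness, that the decoded message differs from `u`. -/
noncomputable def DetCode.errProb {n : ℕ} {R p : ℝ} (C : DetCode n R)
    (A : CausalAdversary n p) : ℝ :=
  (1 / (numMessages n R : ℝ)) *
    ∑ u, ∑ j, A.μ j * (1 - C.dec (A.received (C.enc u) j) u)

/-- A rate `R` is weakly achievable by deterministic codes against causal adversaries with
power `p` if for all `ε > 0`, `δ > 0`, and sufficiently large `n`, some deterministic
`(n, (R-δ)n)`-code has probability of error at most `ε` against every causal adversary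
with power `p`. -/
def weaklyAchievableDet (p R : ℝ) : Prop :=
  ∀ ε > (0 : ℝ), ∀ δ > (0 : ℝ), ∃ N : ℕ, ∀ n ≥ N, ∃ C : DetCode n (R - δ),
    ∀ A : CausalAdversary n p, C.errProb A ≤ ε

/-- The binary entropy function. -/
noncomputable def binaryEntropy (p : ℝ) : ℝ :=
  -p * Real.logb 2 p - (1 - p) * Real.logb 2 (1 - p)

/-!
For the entropy bound the adversary adds a fixed error pattern of weight `⌊pn⌋`. A code that
survives all of these patterns decodes each message correctly, on average, on almost all of the
`n.choose ⌊pn⌋ ≈ 2^(H(p)n)` words around its codeword, and there are only `2^n` words to share.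

For the bound `1 - 4p` the adversary waits and pushes. It lets the first `ℓ` bits pass, for `ℓ/n`
slightly below the rate, so that many codewords typically share the observed prefix. It then fixes
another codeword `t` with this prefix and, where the transmitted `x` differs from `t`, replaces the
bit by a fair coin flip. This needs about `d(x, t)/2` flips, and as long as the budget suffices the
received word does not reveal whether `x` was sent and pushed towards `t` or conversely, so the
decoder errs on one of the two with probability at least one half. By Plotkin's averaging argument
codewords that agree in their first `ℓ` bits have average distance at most `(n - ℓ)/2`, hence a
constant fraction of the pairs is close enough for the attack as soon as `(n - ℓ)/4 < pn`.
-/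

section BinomialEntropy

open scoped Nat

lemma pow_mul_factorial_le_pow_self_mul_factorial (j k : ℕ) : k ^ j * k ! ≤ k ^ k * j ! := by
  rcases le_total j k with hjk | hkj
  · calc k ^ j * k ! = k ^ j * (k - (k - j))! * k.descFactorial (k - j) := by
          rw [mul_assoc, Nat.factorial_mul_descFactorial (Nat.sub_le k j)]
      _ ≤ k ^ j * j ! * k ^ (k - j) := by
          rw [Nat.sub_sub_self hjk]
          gcongr
          exact Nat.descFactorial_le_pow k (k - j)
      _ = k ^ k * j ! := by rw [mul_right_comm, pow_mul_pow_sub k hjk]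
  · calc k ^ j * k ! = k ^ k * (k ! * k ^ (j - k)) := by
          rw [← pow_mul_pow_sub k hkj, mul_assoc, mul_comm (k ^ (j - k))]
      _ ≤ k ^ k * j ! := by
          gcongr
          exact Nat.factorial_mul_pow_sub_le_factorial hkj

lemma choose_mul_pow_mul_pow_le {j k n : ℕ} (hj : j ≤ n) (hk : k ≤ n) :
    n.choose j * (k ^ j * (n - k) ^ (n - j)) ≤ n.choose k * (k ^ k * (n - k) ^ (n - k)) := by
  refine le_of_mul_le_mul_right ?_ (Nat.mul_pos k.factorial_pos (n - k).factorial_pos)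
  calc n.choose j * (k ^ j * (n - k) ^ (n - j)) * (k ! * (n - k)!)
      = n.choose j * ((k ^ j * k !) * ((n - k) ^ (n - j) * (n - k)!)) := by ring
    _ ≤ n.choose j * ((k ^ k * j !) * ((n - k) ^ (n - k) * (n - j)!)) := by
        exact Nat.mul_le_mul_left _ (Nat.mul_le_mul
          (pow_mul_factorial_le_pow_self_mul_factorial j k)
          (pow_mul_factorial_le_pow_self_mul_factorial (n - j) (n - k)))
    _ = n.choose j * j ! * (n - j)! * (k ^ k * (n - k) ^ (n - k)) := by ring
    _ = n.choose k * k ! * (n - k)! * (k ^ k * (n - k) ^ (n - k)) := by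
        rw [Nat.choose_mul_factorial_mul_factorial hj, Nat.choose_mul_factorial_mul_factorial hk]
    _ = n.choose k * (k ^ k * (n - k) ^ (n - k)) * (k ! * (n - k)!) := by ring

lemma pow_self_le_succ_mul_choose_mul {k n : ℕ} (hk : k ≤ n) :
    n ^ n ≤ (n + 1) * n.choose k * (k ^ k * (n - k) ^ (n - k)) :=
  calc n ^ n = ∑ j ∈ range (n + 1), n.choose j * (k ^ j * (n - k) ^ (n - j)) := by
        conv_lhs => rw [← Nat.add_sub_cancel' hk, add_pow]
        simp only [Nat.add_sub_cancel' hk, Nat.cast_id, mul_comm (n.choose _)]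
    _ ≤ ∑ _j ∈ range (n + 1), n.choose k * (k ^ k * (n - k) ^ (n - k)) :=
        sum_le_sum fun j hj => choose_mul_pow_mul_pow_le (mem_range_succ_iff.mp hj) hk
    _ = (n + 1) * n.choose k * (k ^ k * (n - k) ^ (n - k)) := by
        rw [sum_const, card_range, smul_eq_mul, mul_assoc]

lemma mul_log_div_eq_log_pow_self (k n : ℕ) (hn : n ≠ 0) :
    k * Real.log (k / n) = Real.log (k ^ k) - k * Real.log n := by
  rcases eq_or_ne k 0 with rfl | hk
  · simp
  · rw [Real.log_div (by exact_mod_cast hk) (by exact_mod_cast hn), Real.log_pow, mul_sub]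

lemma mul_binEntropy_div {k n : ℕ} (hk : k ≤ n) :
    n * Real.binEntropy (k / n) =
      Real.log (n ^ n) - Real.log (k ^ k) - Real.log ((n - k : ℕ) ^ (n - k)) := by
  rcases eq_or_ne n 0 with rfl | hn
  · simp [Nat.le_zero.mp hk]
  have hn' : (n : ℝ) ≠ 0 := by exact_mod_cast hn
  have hcompl : 1 - (k : ℝ) / n = (n - k : ℕ) / n := by
    rw [Nat.cast_sub hk, sub_div, div_self hn']
  calc n * Real.binEntropy (k / n)
      = -(k * Real.log (k / n)) - (n - k : ℕ) * Real.log ((n - k : ℕ) / n) := by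
        rw [Real.binEntropy, hcompl, Real.log_inv, Real.log_inv]
        field_simp
        ring
    _ = Real.log (n ^ n) - Real.log (k ^ k) - Real.log ((n - k : ℕ) ^ (n - k)) := by
        rw [mul_log_div_eq_log_pow_self k n hn, mul_log_div_eq_log_pow_self (n - k) n hn,
          Real.log_pow n, Nat.cast_sub hk]
        ring

lemma mul_binEntropy_div_le_log_choose {k n : ℕ} (hk : k ≤ n) :
    n * Real.binEntropy (k / n) ≤ Real.log ((n + 1) * n.choose k) := by
  have hchoose : (0 : ℝ) < n.choose k := by exact_mod_cast Nat.choose_pos hk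
  have hpow_self (m : ℕ) : (0 : ℝ) < m ^ m := by exact_mod_cast Nat.pow_self_pos
  have hle : (n : ℝ) ^ n ≤ (n + 1) * n.choose k * (k ^ k * (n - k : ℕ) ^ (n - k)) := by
    exact_mod_cast pow_self_le_succ_mul_choose_mul hk
  have hlog := Real.log_le_log (hpow_self n) hle
  rw [Real.log_mul (by positivity) (mul_pos (hpow_self k) (hpow_self (n - k))).ne',
    Real.log_mul (hpow_self k).ne' (hpow_self (n - k)).ne'] at hlog
  linarith [mul_binEntropy_div hk]

lemma binaryEntropy_mul_log_two (p : ℝ) : binaryEntropy p * Real.log 2 = Real.binEntropy p := by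
  have hlog : Real.log 2 ≠ 0 := (Real.log_pos one_lt_two).ne'
  simp only [binaryEntropy, Real.binEntropy, Real.logb, Real.log_inv]
  field_simp
  ring

end BinomialEntropy

section CausalChannels

/-- A map from transmitted to received words is causal if each received bit is determined by the
transmitted bits up to and including that position. A deterministic causal adversary is the same
thing as a causal map that moves every word by at most its power budget. -/
def IsCausal {n : ℕ} (Y : (Fin n → Bool) → Fin n → Bool) : Prop :=
  ∀ ⦃x x' i⦄, (∀ j ≤ i, x j = x' j) → Y x i = Y x' i

variable {n : ℕ} {R p : ℝ}

/-- The word of length `n` that extends an observed prefix `(x_0, …, x_i)` by `false`. -/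
def padPrefix {i : Fin n} (w : Fin (i.1 + 1) → Bool) : Fin n → Bool :=
  fun k => if h : k ≤ i then w ⟨k, Nat.lt_succ_of_le h⟩ else false

lemma IsCausal.apply_padPrefix {Y : (Fin n → Bool) → Fin n → Bool} (hY : IsCausal Y)
    (x : Fin n → Bool) (i : Fin n) : Y (padPrefix (wordPrefix x i)) i = Y x i :=
  hY fun _ hj => dif_pos hj

/-- The deterministic causal adversary that turns each transmitted word `x` into `Y x`. Its jamming
functions evaluate `Y` on the padded prefix; by causality the padding is irrelevant. -/
def CausalAdversary.ofMap (Y : (Fin n → Bool) → Fin n → Bool) (hY : IsCausal Y)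
    (hdist : ∀ x, (hammingDist x (Y x) : ℝ) ≤ p * n) : CausalAdversary n p where
  J := Unit
  μ _ := 1
  μ_nonneg _ := zero_le_one
  μ_sum := by simp
  g i w _ := xor (w (Fin.last i)) (Y (padPrefix w) i)
  power x _ := by
    simpa only [hY.apply_padPrefix, hammingDist, wordPrefix, Fin.val_last, Fin.eta, bne_iff_ne]
      using hdist x

lemma CausalAdversary.received_ofMap (Y : (Fin n → Bool) → Fin n → Bool) (hY : IsCausal Y)
    (hdist : ∀ x, (hammingDist x (Y x) : ℝ) ≤ p * n) (x : Fin n → Bool) (j) :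
    (ofMap Y hY hdist).received x j = Y x := by
  funext i
  simp [received, ofMap, hY.apply_padPrefix, wordPrefix]

lemma two_rpow_le_numMessages (n : ℕ) (R : ℝ) : (2 : ℝ) ^ (R * n) ≤ numMessages n R :=
  Nat.le_ceil _

lemma numMessages_pos (n : ℕ) (R : ℝ) : 0 < numMessages n R :=
  Nat.ceil_pos.mpr (by positivity)

namespace DetCode

/-- The probability that the received word `y` is not decoded to the message `u`. -/
def failProb (C : DetCode n R) (y : Fin n → Bool) (u : Fin (numMessages n R)) : ℝ :=
  1 - C.dec y u

lemma failProb_nonneg (C : DetCode n R) (y : Fin n → Bool) (u : Fin (numMessages n R)) :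
    0 ≤ C.failProb y u := by
  rw [failProb, sub_nonneg, ← C.dec_sum y]
  exact single_le_sum (fun v _ => C.dec_nonneg y v) (mem_univ u)

lemma one_le_failProb_add_failProb (C : DetCode n R) (y : Fin n → Bool)
    {u v : Fin (numMessages n R)} (huv : u ≠ v) : 1 ≤ C.failProb y u + C.failProb y v := by
  have hpair : C.dec y u + C.dec y v ≤ 1 := by
    rw [← C.dec_sum y, ← sum_pair huv]
    exact sum_le_univ_sum_of_nonneg (C.dec_nonneg y)
  simp only [failProb]
  linarith

lemma errProb_ofMap (C : DetCode n R) (Y : (Fin n → Bool) → Fin n → Bool) (hY : IsCausal Y)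
    (hdist : ∀ x, (hammingDist x (Y x) : ℝ) ≤ p * n) :
    C.errProb (.ofMap Y hY hdist) =
      (∑ u, C.failProb (Y (C.enc u)) u) / numMessages n R := by
  simp only [errProb, CausalAdversary.received_ofMap, ← sum_mul, CausalAdversary.μ_sum, one_mul,
    one_div_mul_eq_div, failProb]

lemma sum_failProb_le {ε : ℝ} {C : DetCode n R} (hC : ∀ A : CausalAdversary n p, C.errProb A ≤ ε)
    {Y : (Fin n → Bool) → Fin n → Bool} (hY : IsCausal Y)
    (hdist : ∀ x, (hammingDist x (Y x) : ℝ) ≤ p * n) :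
    ∑ u, C.failProb (Y (C.enc u)) u ≤ ε * numMessages n R := by
  rw [← div_le_iff₀ (by exact_mod_cast numMessages_pos n R), ← C.errProb_ofMap Y hY hdist]
  exact hC _

end DetCode

end CausalChannels

section SpherePacking

variable {n : ℕ} {R p ε : ℝ} {C : DetCode n R}

/-- The word `x` with the bits in the positions of the error pattern `S` flipped. -/
def flipOn (S : Finset (Fin n)) (x : Fin n → Bool) : Fin n → Bool :=
  fun i => xor (x i) (i ∈ S)

lemma hammingDist_flipOn (S : Finset (Fin n)) (x : Fin n → Bool) :
    hammingDist x (flipOn S x) = #S := by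
  refine congrArg card (ext fun i => ?_)
  rw [mem_filter_univ, flipOn]
  cases x i <;> simp

lemma flipOn_left_injective (x : Fin n → Bool) : Function.Injective (flipOn · x) :=
  fun S T hST => by
    ext i
    simpa [flipOn] using congrFun hST i

lemma DetCode.one_sub_mul_le_sum_dec_flipOn (hC : ∀ A : CausalAdversary n p, C.errProb A ≤ ε)
    {S : Finset (Fin n)} (hS : (#S : ℝ) ≤ p * n) :
    (1 - ε) * numMessages n R ≤ ∑ u, C.dec (flipOn S (C.enc u)) u := by
  have hfail := C.sum_failProb_le hC (Y := flipOn S)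
    (fun x x' i h => by simp only [flipOn, h i le_rfl]) fun x => by rwa [hammingDist_flipOn]
  simp only [failProb, sum_sub_distrib, sum_const, card_univ, Fintype.card_fin, nsmul_eq_mul,
    mul_one] at hfail
  linarith

lemma DetCode.choose_mul_le_two_pow (hC : ∀ A : CausalAdversary n p, C.errProb A ≤ ε) {k : ℕ}
    (hk : (k : ℝ) ≤ p * n) : n.choose k * ((1 - ε) * numMessages n R) ≤ 2 ^ n :=
  calc n.choose k * ((1 - ε) * numMessages n R)
      = ∑ _S ∈ powersetCard k (univ : Finset (Fin n)), (1 - ε) * numMessages n R := by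
        simp only [sum_const, card_powersetCard, card_univ, Fintype.card_fin, nsmul_eq_mul]
    _ ≤ ∑ S ∈ powersetCard k (univ : Finset (Fin n)), ∑ u, C.dec (flipOn S (C.enc u)) u :=
        sum_le_sum fun S hS =>
          C.one_sub_mul_le_sum_dec_flipOn hC (by rwa [(mem_powersetCard.mp hS).2])
    _ = ∑ u, ∑ S ∈ powersetCard k (univ : Finset (Fin n)), C.dec (flipOn S (C.enc u)) u := sum_comm
    _ ≤ ∑ u, ∑ y, C.dec y u := by
        refine sum_le_sum fun u _ => ?_
        rw [← sum_image (f := (C.dec · u)) (flipOn_left_injective (C.enc u)).injOn]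
        exact sum_le_univ_sum_of_nonneg fun y => C.dec_nonneg y u
    _ = ∑ y, ∑ u, C.dec y u := sum_comm
    _ = 2 ^ n := by simp [C.dec_sum]

lemma DetCode.binEntropy_add_rate_le (hC : ∀ A : CausalAdversary n p, C.errProb A ≤ ε)
    (hε : ε < 1) {k : ℕ} (hkn : k ≤ n) (hk : (k : ℝ) ≤ p * n) :
    n * Real.binEntropy (k / n) + n * (R * Real.log 2) ≤
      n * Real.log 2 + Real.log (n + 1) - Real.log (1 - ε) := by
  have hchoose : (0 : ℝ) < n.choose k := by exact_mod_cast Nat.choose_pos hkn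
  have hε' : 0 < 1 - ε := by linarith
  have hcount : n.choose k * ((1 - ε) * (2 : ℝ) ^ (R * n)) ≤ 2 ^ n :=
    le_trans (by gcongr; exact two_rpow_le_numMessages n R) (C.choose_mul_le_two_pow hC hk)
  have hlog := Real.log_le_log (by positivity) hcount
  rw [Real.log_mul hchoose.ne' (by positivity), Real.log_mul hε'.ne' (by positivity),
    Real.log_rpow two_pos, Real.log_pow] at hlog
  have hent := mul_binEntropy_div_le_log_choose hkn
  rw [Real.log_mul (by positivity) hchoose.ne'] at hent
  linarith

end SpherePacking

lemma weaklyAchievableDet.eventually_exists_code {p R ε δ : ℝ} (h : weaklyAchievableDet p R)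
    (hε : 0 < ε) (hδ : 0 < δ) : ∀ᶠ n : ℕ in Filter.atTop,
      ∃ C : DetCode n (R - δ), ∀ A : CausalAdversary n p, C.errProb A ≤ ε :=
  Filter.eventually_atTop.mpr (h ε hε δ hδ)

section EntropyBound

open Filter Topology

lemma tendsto_log_succ_div_atTop :
    Tendsto (fun n : ℕ => Real.log (n + 1) / n) atTop (𝓝 0) := by
  have h := (Real.tendsto_pow_log_div_mul_add_atTop 1 (-1) 1 one_ne_zero).comp
    (tendsto_natCast_atTop_atTop.comp (tendsto_add_atTop_nat 1))
  simpa [Function.comp_def] using h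

lemma weaklyAchievableDet.le_one_sub_binaryEntropy {p R : ℝ} (h : weaklyAchievableDet p R)
    (hp : p ∈ Set.Icc 0 1) : R ≤ 1 - binaryEntropy p := by
  refine le_of_forall_sub_le fun δ hδ => ?_
  have hlog2 : 0 < Real.log 2 := Real.log_pos one_lt_two
  have hfinite : ∀ᶠ n : ℕ in atTop,
      Real.binEntropy (⌊p * n⌋₊ / n) + (R - δ) * Real.log 2 ≤
        Real.log 2 + Real.log (n + 1) / n - Real.log (1 - 1 / 2) / n := by
    filter_upwards [h.eventually_exists_code one_half_pos hδ, eventually_gt_atTop 0]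
      with n ⟨C, hC⟩ hn
    have hn' : (0 : ℝ) < n := by exact_mod_cast hn
    have hfloor : ⌊p * n⌋₊ ≤ n := Nat.floor_le_of_le (mul_le_of_le_one_left hn'.le hp.2)
    have hbound := C.binEntropy_add_rate_le hC one_half_lt_one hfloor
      (Nat.floor_le (mul_nonneg hp.1 hn'.le))
    refine le_of_mul_le_mul_left ?_ hn'
    field_simp at hbound ⊢
    linarith
  have hlhs : Tendsto (fun n : ℕ => Real.binEntropy (⌊p * n⌋₊ / n) + (R - δ) * Real.log 2) atTop
      (𝓝 (Real.binEntropy p + (R - δ) * Real.log 2)) :=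
    ((Real.binEntropy_continuous.tendsto p).comp
      ((tendsto_nat_floor_mul_div_atTop hp.1).comp tendsto_natCast_atTop_atTop)).add_const _
  have hrhs : Tendsto (fun n : ℕ => Real.log 2 + Real.log (n + 1) / n - Real.log (1 - 1 / 2) / n)
      atTop (𝓝 (Real.log 2 + 0 - 0)) :=
    (tendsto_log_succ_div_atTop.const_add _).sub (tendsto_const_div_atTop_nhds_zero_nat _)
  have hlimit := le_of_tendsto_of_tendsto hlhs hrhs hfinite
  rw [← binaryEntropy_mul_log_two] at hlimit
  refine le_of_mul_le_mul_right ?_ hlog2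
  linarith

end EntropyBound

section Steering

variable {n K : ℕ} {x m : Fin n → Bool}

/-- The word received when `x` is transmitted and the adversary forces the bits of `m` for as long
as at most `K` flips have been needed; later bits pass unchanged. -/
def steer (K : ℕ) (x m : Fin n → Bool) : Fin n → Bool :=
  fun i => if #{j | j ≤ i ∧ x j ≠ m j} ≤ K then m i else x i

lemma steer_eq_of_hammingDist_le (h : hammingDist x m ≤ K) : steer K x m = m := by
  funext i
  refine if_pos (le_trans (card_le_card fun j hj => ?_) h)
  simp only [mem_filter_univ] at hj ⊢
  exact hj.2

lemma hammingDist_steer_le (K : ℕ) (x m : Fin n → Bool) : hammingDist x (steer K x m) ≤ K := by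
  rcases eq_empty_or_nonempty ({i | x i ≠ steer K x m i} : Finset (Fin n)) with hnone | hsome
  · simp [hammingDist, hnone]
  have flip_spec {i : Fin n} (hi : x i ≠ steer K x m i) :
      #{j | j ≤ i ∧ x j ≠ m j} ≤ K ∧ x i ≠ m i := by
    simp only [steer] at hi
    split_ifs at hi with hK
    exacts [⟨hK, hi⟩, absurd rfl hi]
  have hlast := max'_mem _ hsome
  set last := max' _ hsome
  rw [mem_filter_univ] at hlast
  refine le_trans (card_le_card fun i hi => ?_) (flip_spec hlast).1
  have hle : i ≤ last := le_max' _ i hi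
  rw [mem_filter_univ] at hi ⊢
  exact ⟨hle, (flip_spec hi).2⟩

lemma IsCausal.steer {Y : (Fin n → Bool) → Fin n → Bool} (hY : IsCausal Y) (K : ℕ) :
    IsCausal fun x => steer K x (Y x) := by
  intro x x' i hx
  have hflips : ({j | j ≤ i ∧ x j ≠ Y x j} : Finset (Fin n)) =
      ({j | j ≤ i ∧ x' j ≠ Y x' j} : Finset (Fin n)) :=
    filter_congr fun j _ => and_congr_right fun hj => by
      rw [hx j hj, hY fun k hk => hx k (hk.trans hj)]
  simp only [_root_.steer, hflips, hY hx, hx i le_rfl]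

end Steering

section CoinMixing

open scoped BigOperators

variable {ι : Type*}

/-- The word that keeps the bits on which `x` and `t` agree and takes the coin flips `s` elsewhere.
It carries no information on which of `x` and `t` it was produced from. -/
def coinMix (s x t : ι → Bool) : ι → Bool :=
  fun i => if x i = t i then x i else s i

lemma coinMix_comm (s x t : ι → Bool) : coinMix s x t = coinMix s t x := by
  funext i
  simp only [coinMix, eq_comm (a := t i)]
  split_ifs with h
  exacts [h, rfl]

variable [Fintype ι]

/-- The number of positions with `x i ≠ t i` where the coin `s i` shows the bit of `x`, minus the
number of those where it shows the bit of `t`. -/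
def coinImbalance (s x t : ι → Bool) : ℝ :=
  ∑ i with x i ≠ t i, if s i = x i then 1 else -1

lemma coinImbalance_comm (s x t : ι → Bool) : coinImbalance s t x = -coinImbalance s x t := by
  simp only [coinImbalance, ← sum_neg_distrib, ne_comm (a := t _)]
  refine sum_congr rfl fun i hi => ?_
  rw [mem_filter_univ] at hi
  revert hi
  cases s i <;> cases x i <;> cases t i <;> simp

lemma two_mul_hammingDist_coinMix (s x t : ι → Bool) :
    2 * (hammingDist x (coinMix s x t) : ℝ) = hammingDist x t - coinImbalance s x t := by
  simp only [hammingDist, coinImbalance, card_filter, Nat.cast_sum, sum_filter]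
  rw [mul_sum, ← sum_sub_distrib]
  refine sum_congr rfl fun i _ => ?_
  rw [coinMix]
  cases s i <;> cases x i <;> cases t i <;> norm_num

variable [DecidableEq ι]

lemma expect_sign_mul_sign (x : ι → Bool) (i j : ι) :
    𝔼 s : ι → Bool, (if s i = x i then 1 else -1 : ℝ) * (if s j = x j then 1 else -1) =
      if i = j then 1 else 0 := by
  split_ifs with hij
  · subst hij
    exact (expect_congr rfl fun s _ => by split_ifs <;> norm_num).trans
      (Fintype.expect_const (1 : ℝ))
  · let flip (s : ι → Bool) : ι → Bool := Function.update s i (!s i)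
    have flip_involutive : Function.Involutive flip := fun s => by simp [flip]
    have hneg := Fintype.expect_equiv flip_involutive.toPerm
      (fun s => -((if s i = x i then 1 else -1 : ℝ) * (if s j = x j then 1 else -1)))
      (fun s => (if s i = x i then 1 else -1) * (if s j = x j then 1 else -1)) fun s => by
        simp only [Function.Involutive.coe_toPerm, flip, Function.update_self,
          Function.update_of_ne (Ne.symm hij)]
        cases s i <;> cases x i <;> split_ifs <;> simp_all
    rw [expect_neg_distrib] at hneg
    linarith

lemma expect_coinImbalance_sq (x t : ι → Bool) :
    𝔼 s, coinImbalance s x t ^ 2 = hammingDist x t := by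
  simp only [coinImbalance, sq, sum_mul_sum, expect_sum_comm, expect_sign_mul_sign,
    sum_ite_eq, sum_ite_mem, inter_self, sum_const, nsmul_eq_mul, mul_one, hammingDist]

end CoinMixing

section Push

open scoped BigOperators

variable {n K : ℕ} {R : ℝ}

/-- The word received when `x` is transmitted and the adversary pushes it towards `t`: with coin
flips `s`, it makes the transmission look like `coinMix s x t` until `K` bits have been flipped. -/
def push (K : ℕ) (s x t : Fin n → Bool) : Fin n → Bool :=
  steer K x (coinMix s x t)

lemma push_eq_coinMix {s x t : Fin n → Bool}
    (h : |coinImbalance s x t| ≤ 2 * K - hammingDist x t) : push K s x t = coinMix s x t := by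
  refine steer_eq_of_hammingDist_le ?_
  have hdist := two_mul_hammingDist_coinMix s x t
  rify
  linarith [neg_le_of_abs_le h]

lemma push_comm {s x t : Fin n → Bool} (h : |coinImbalance s x t| ≤ 2 * K - hammingDist x t) :
    push K s x t = push K s t x := by
  rw [push_eq_coinMix h, coinMix_comm, push_eq_coinMix]
  rwa [coinImbalance_comm, abs_neg, hammingDist_comm]

namespace DetCode

/-- The probability, over fair coin flips and the decoder's randomness, that the message `u` is not
decoded when the adversary pushes its codeword towards `t` with budget `K`. -/
noncomputable def pushErr (C : DetCode n R) (K : ℕ) (t : Fin n → Bool)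
    (u : Fin (numMessages n R)) : ℝ :=
  𝔼 s, C.failProb (push K s (C.enc u) t) u

lemma pushErr_nonneg (C : DetCode n R) (K : ℕ) (t : Fin n → Bool) (u : Fin (numMessages n R)) :
    0 ≤ C.pushErr K t u :=
  expect_nonneg fun _ _ => C.failProb_nonneg _ _

variable {u v : Fin (numMessages n R)}

/-- When the coins are balanced enough for both pushes to stay within budget, `u` pushed towards `v`
and `v` pushed towards `u` are received as the same word. Chebyshev's inequality bounds the
probability of the other case. -/
lemma one_sub_div_sq_le_pushErr_add_pushErr (C : DetCode n R) (huv : u ≠ v)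
    (hK : (hammingDist (C.enc u) (C.enc v) : ℝ) < 2 * K) :
    1 - hammingDist (C.enc u) (C.enc v) / (2 * K - hammingDist (C.enc u) (C.enc v) : ℝ) ^ 2 ≤
      C.pushErr K (C.enc v) u + C.pushErr K (C.enc u) v := by
  set r : ℝ := 2 * K - hammingDist (C.enc u) (C.enc v)
  have hr0 : 0 < r := sub_pos.mpr hK
  calc 1 - hammingDist (C.enc u) (C.enc v) / r ^ 2
      = 𝔼 s, (1 - coinImbalance s (C.enc u) (C.enc v) ^ 2 / r ^ 2) := by
        rw [expect_sub_distrib, Fintype.expect_const, ← expect_div, expect_coinImbalance_sq]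
    _ ≤ 𝔼 s, (C.failProb (push K s (C.enc u) (C.enc v)) u +
          C.failProb (push K s (C.enc v) (C.enc u)) v) := by
        refine expect_le_expect fun s _ => ?_
        rcases le_or_gt |coinImbalance s (C.enc u) (C.enc v)| r with hle | hgt
        · rw [← push_comm hle]
          have hconfused := C.one_le_failProb_add_failProb (push K s (C.enc u) (C.enc v)) huv
          linarith [div_nonneg (sq_nonneg (coinImbalance s (C.enc u) (C.enc v))) (sq_nonneg r)]
        · have hfar : 1 ≤ coinImbalance s (C.enc u) (C.enc v) ^ 2 / r ^ 2 := by
            rw [one_le_div (by positivity), sq_le_sq, abs_of_pos hr0]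
            exact hgt.le
          linarith [C.failProb_nonneg (push K s (C.enc u) (C.enc v)) u,
            C.failProb_nonneg (push K s (C.enc v) (C.enc u)) v]
    _ = C.pushErr K (C.enc v) u + C.pushErr K (C.enc u) v := expect_add_distrib _ _ _

lemma one_sub_div_le_pushErr_add_pushErr (C : DetCode n R) (huv : u ≠ v) {T : ℝ} (hT : 0 < T)
    (hTK : T < 2 * K) (hTsq : T ≤ (2 * K - T) ^ 2) :
    1 - hammingDist (C.enc u) (C.enc v) / T ≤
      C.pushErr K (C.enc v) u + C.pushErr K (C.enc u) v := by
  rcases le_or_gt (hammingDist (C.enc u) (C.enc v) : ℝ) T with hle | hgt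
  · refine le_trans ?_ (C.one_sub_div_sq_le_pushErr_add_pushErr huv (hle.trans_lt hTK))
    gcongr
    exact hTsq.trans (pow_le_pow_left₀ (sub_nonneg.mpr hTK.le) (by linarith) 2)
  · have hneg : 1 - hammingDist (C.enc u) (C.enc v) / T < 0 :=
      sub_neg.mpr ((one_lt_div hT).mpr hgt)
    linarith [C.pushErr_nonneg K (C.enc v) u, C.pushErr_nonneg K (C.enc u) v]

end DetCode

end Push

section Plotkin

variable {α ι : Type*}

lemma sum_sum_ite_ne_le (b : α → Bool) (V : Finset α) :
    ∑ u ∈ V, ∑ v ∈ V, (if b u ≠ b v then 1 else 0 : ℝ) ≤ #V ^ 2 / 2 := by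
  let sign (u : α) : ℝ := if b u then 1 else -1
  calc ∑ u ∈ V, ∑ v ∈ V, (if b u ≠ b v then 1 else 0 : ℝ)
      = ∑ u ∈ V, ∑ v ∈ V, (1 - sign u * sign v) / 2 := by
        refine sum_congr rfl fun u _ => sum_congr rfl fun v _ => ?_
        simp only [sign]
        cases b u <;> cases b v <;> norm_num
    _ = (#V ^ 2 - (∑ u ∈ V, sign u) ^ 2) / 2 := by
        simp only [← sum_div, sum_sub_distrib, sq, sum_mul_sum, sum_const, nsmul_eq_mul, mul_one]
    _ ≤ #V ^ 2 / 2 := by linarith [sq_nonneg (∑ u ∈ V, sign u)]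

lemma sum_sum_hammingDist_le [Fintype ι] (e : α → ι → Bool) {V : Finset α} {S : Finset ι}
    (hagree : ∀ u ∈ V, ∀ v ∈ V, ∀ i ∉ S, e u i = e v i) :
    ∑ u ∈ V, ∑ v ∈ V, (hammingDist (e u) (e v) : ℝ) ≤ #V ^ 2 * #S / 2 := by
  have hammingDist_eq : ∀ u ∈ V, ∀ v ∈ V,
      (hammingDist (e u) (e v) : ℝ) = ∑ i ∈ S, if e u i ≠ e v i then 1 else 0 := by
    intro u hu v hv
    rw [hammingDist, card_filter, Nat.cast_sum]
    push_cast
    exact (sum_subset (subset_univ S) fun i _ hi => by simp [hagree u hu v hv i hi]).symm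
  calc ∑ u ∈ V, ∑ v ∈ V, (hammingDist (e u) (e v) : ℝ)
      = ∑ u ∈ V, ∑ v ∈ V, ∑ i ∈ S, (if e u i ≠ e v i then 1 else 0 : ℝ) :=
        sum_congr rfl fun u hu => sum_congr rfl fun v hv => hammingDist_eq u hu v hv
    _ = ∑ i ∈ S, ∑ u ∈ V, ∑ v ∈ V, (if e u i ≠ e v i then 1 else 0 : ℝ) := by
        simp only [sum_comm (s := V) (t := S)]
    _ ≤ ∑ _i ∈ S, (#V ^ 2 / 2 : ℝ) := sum_le_sum fun i _ => sum_sum_ite_ne_le (e · i) V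
    _ = #V ^ 2 * #S / 2 := by
        rw [sum_const, nsmul_eq_mul]
        ring

end Plotkin

section WaitAndPush

open scoped BigOperators

variable {n K ℓ : ℕ} {R p ε T : ℝ}

/-- The word with the first `ℓ` bits of `x` whose other bits are those of a word chosen by `w` from
these `ℓ` bits. -/
def divert (hℓ : ℓ ≤ n) (w : (Fin ℓ → Bool) → Fin n → Bool) (x : Fin n → Bool) : Fin n → Bool :=
  fun i => if i < ℓ then x i else w (Fin.take ℓ hℓ x) i

lemma isCausal_divert (hℓ : ℓ ≤ n) (w : (Fin ℓ → Bool) → Fin n → Bool) :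
    IsCausal (divert hℓ w) := by
  intro x x' i hx
  simp only [divert]
  split_ifs with hi
  · exact hx i le_rfl
  · have htake : Fin.take ℓ hℓ x = Fin.take ℓ hℓ x' :=
      funext fun j => hx _ (Fin.le_def.mpr (j.is_lt.le.trans (not_lt.mp hi)))
    rw [htake]

lemma IsCausal.push {Y : (Fin n → Bool) → Fin n → Bool} (hY : IsCausal Y) (K : ℕ)
    (s : Fin n → Bool) : IsCausal fun x => push K s x (Y x) := by
  refine IsCausal.steer (Y := fun x => coinMix s x (Y x)) (fun x x' i hx => ?_) K
  simp only [coinMix, hx i le_rfl, hY hx]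

namespace DetCode

variable {C : DetCode n R}

lemma sum_pushErr_divert_le (hC : ∀ A : CausalAdversary n p, C.errProb A ≤ ε)
    (hK : (K : ℝ) ≤ p * n) (hℓ : ℓ ≤ n) (w : (Fin ℓ → Bool) → Fin n → Bool) :
    ∑ u, C.pushErr K (divert hℓ w (C.enc u)) u ≤ ε * numMessages n R := by
  simp only [pushErr, ← expect_sum_comm]
  exact expect_le univ_nonempty fun s _ =>
    C.sum_failProb_le hC ((isCausal_divert hℓ w).push K s) fun x =>
      le_trans (by exact_mod_cast hammingDist_steer_le K x _) hK

lemma mul_le_sum_sum_pushErr (C : DetCode n R) (hT : 0 < T) (hTK : T < 2 * K)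
    (hTsq : T ≤ (2 * K - T) ^ 2) (hℓ : ℓ ≤ n) {V : Finset (Fin (numMessages n R))}
    (hagree : ∀ u ∈ V, ∀ v ∈ V, ∀ i : Fin n, i < ℓ → C.enc u i = C.enc v i) :
    #V * ((#V * (1 - (n - ℓ) / (2 * T)) - 1) / 2) ≤
      ∑ v ∈ V, ∑ u ∈ V, C.pushErr K (C.enc v) u := by
  have hpair : ∀ v ∈ V, ∀ u ∈ V,
      1 - hammingDist (C.enc v) (C.enc u) / T - (if v = u then 1 else 0) ≤
        C.pushErr K (C.enc u) v + C.pushErr K (C.enc v) u := by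
    intro v _ u _
    split_ifs with hvu
    · subst hvu
      simpa using C.pushErr_nonneg K (C.enc v) v
    · simpa using C.one_sub_div_le_pushErr_add_pushErr hvu hT hTK hTsq
  have hsum := sum_le_sum fun v hv => sum_le_sum (hpair v hv)
  simp only [sum_add_distrib, sum_sub_distrib, ← sum_div, sum_const, nsmul_eq_mul, mul_one,
    sum_ite_eq, sum_ite_mem, inter_self] at hsum
  rw [sum_comm (f := fun v u => C.pushErr K (C.enc u) v)] at hsum
  have hplotkin : (∑ v ∈ V, ∑ u ∈ V, (hammingDist (C.enc v) (C.enc u) : ℝ)) / T ≤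
      #V ^ 2 * (n - ℓ) / 2 / T := by
    have hcard : #({i : Fin n | i < ℓ} : Finset (Fin n))ᶜ = n - ℓ := by
      rw [card_compl, Fin.card_filter_val_lt, Fintype.card_fin, min_eq_right hℓ]
    rw [← Nat.cast_sub hℓ, ← hcard]
    gcongr
    exact sum_sum_hammingDist_le C.enc fun v hv u hu i hi => hagree v hv u hu i (by simpa using hi)
  calc #V * ((#V * (1 - (n - ℓ) / (2 * T)) - 1) / 2)
      = (#V * #V - #V ^ 2 * (n - ℓ) / 2 / T - #V) / 2 := by
        field_simp
    _ ≤ ∑ v ∈ V, ∑ u ∈ V, C.pushErr K (C.enc v) u := by linarith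

lemma exists_le_sum_pushErr (C : DetCode n R) (hT : 0 < T) (hTK : T < 2 * K)
    (hTsq : T ≤ (2 * K - T) ^ 2) (hℓ : ℓ ≤ n) {V : Finset (Fin (numMessages n R))}
    (hagree : ∀ u ∈ V, ∀ v ∈ V, ∀ i : Fin n, i < ℓ → C.enc u i = C.enc v i) :
    ∃ t : Fin n → Bool, (∀ u ∈ V, ∀ i : Fin n, i < ℓ → C.enc u i = t i) ∧
      (#V * (1 - (n - ℓ) / (2 * T)) - 1) / 2 ≤ ∑ u ∈ V, C.pushErr K t u := by
  rcases V.eq_empty_or_nonempty with rfl | hV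
  · exact ⟨fun _ => false, by simp, by norm_num⟩
  have havg := C.mul_le_sum_sum_pushErr hT hTK hTsq hℓ hagree
  rw [← nsmul_eq_mul, ← sum_const] at havg
  obtain ⟨v, hv, hle⟩ := exists_le_of_sum_le hV havg
  exact ⟨C.enc v, fun u hu => hagree u hu v hv, hle⟩

lemma mul_sub_two_pow_le (hC : ∀ A : CausalAdversary n p, C.errProb A ≤ ε)
    (hK : (K : ℝ) ≤ p * n) (hT : 0 < T) (hTK : T < 2 * K) (hTsq : T ≤ (2 * K - T) ^ 2)
    (hℓ : ℓ ≤ n) :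
    numMessages n R * (1 - (n - ℓ) / (2 * T)) - 2 ^ ℓ ≤ 2 * (ε * numMessages n R) := by
  let V (k : Fin ℓ → Bool) : Finset (Fin (numMessages n R)) := {u | Fin.take ℓ hℓ (C.enc u) = k}
  have mem_V {k u} : u ∈ V k ↔ Fin.take ℓ hℓ (C.enc u) = k := mem_filter_univ u
  have hagree (k : Fin ℓ → Bool) :
      ∀ u ∈ V k, ∀ v ∈ V k, ∀ i : Fin n, i < ℓ → C.enc u i = C.enc v i :=
    fun u hu v hv i hi => congrFun ((mem_V.mp hu).trans (mem_V.mp hv).symm) ⟨i, hi⟩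
  choose w hprefix hw using fun k => C.exists_le_sum_pushErr hT hTK hTsq hℓ (hagree k)
  have divert_eq {k u} (hu : u ∈ V k) : divert hℓ w (C.enc u) = w k := by
    funext i
    simp only [divert, mem_V.mp hu]
    split_ifs with hi
    exacts [hprefix k u hu i hi, rfl]
  have hfibers : ∑ k, (#(V k) : ℝ) = numMessages n R := by
    simp only [card_eq_sum_ones, Nat.cast_sum, V, sum_fiberwise]
    simp
  calc numMessages n R * (1 - (n - ℓ) / (2 * T)) - 2 ^ ℓ
      = 2 * ∑ k, (#(V k) * (1 - (n - ℓ) / (2 * T)) - 1) / 2 := by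
        rw [← sum_div, sum_sub_distrib, ← sum_mul, hfibers]
        simp only [sum_const, card_univ, Fintype.card_pi, Fintype.card_bool, prod_const,
          Fintype.card_fin, nsmul_eq_mul, Nat.cast_pow, Nat.cast_ofNat, mul_one]
        ring
    _ ≤ 2 * ∑ k, ∑ u ∈ V k, C.pushErr K (w k) u := by gcongr with k; exact hw k
    _ = 2 * ∑ k, ∑ u ∈ V k, C.pushErr K (divert hℓ w (C.enc u)) u := by
        congr 1
        exact sum_congr rfl fun k _ => sum_congr rfl fun u hu => by rw [divert_eq hu]
    _ = 2 * ∑ u, C.pushErr K (divert hℓ w (C.enc u)) u := by rw [sum_fiberwise]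
    _ ≤ 2 * (ε * numMessages n R) := by gcongr; exact sum_pushErr_divert_le hC hK hℓ w

end DetCode

end WaitAndPush

section PlotkinBound

open Filter Topology

lemma eventually_lt_two_mul_floor {τ p : ℝ} (hτ : τ < 2 * p) :
    ∀ᶠ n : ℕ in atTop, τ * n < 2 * ⌊p * n⌋₊ ∧ τ * n ≤ (2 * ⌊p * n⌋₊ - τ * n) ^ 2 := by
  set c := 2 * p - τ with hc
  have hc0 : 0 < c := sub_pos.mpr hτ
  filter_upwards [tendsto_natCast_atTop_atTop.eventually_ge_atTop (4 / c),
    tendsto_natCast_atTop_atTop.eventually_ge_atTop (4 * τ / c ^ 2)] with n hlin hquad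
  rw [div_le_iff₀ hc0] at hlin
  rw [div_le_iff₀ (by positivity)] at hquad
  have hgap : n * c / 2 < 2 * ⌊p * n⌋₊ - τ * n := by
    have hfloor := Nat.lt_floor_add_one (p * n)
    linear_combination hlin / 2 + 2 * hfloor + n * hc
  have hgap0 : 0 < n * c / 2 := by linarith
  refine ⟨by linarith, le_trans ?_ (pow_le_pow_left₀ hgap0.le hgap.le 2)⟩
  linear_combination n / 4 * hquad

lemma two_pow_floor_div_numMessages_le (n : ℕ) {r : ℝ} (hr : 0 ≤ r) (R : ℝ) :
    (2 : ℝ) ^ ⌊r * n⌋₊ / numMessages n R ≤ ((2 : ℝ) ^ (r - R)) ^ n :=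
  calc (2 : ℝ) ^ ⌊r * n⌋₊ / numMessages n R ≤ 2 ^ (r * n) / 2 ^ (R * n) := by
        rw [← Real.rpow_natCast]
        gcongr
        · exact one_le_two
        · exact Nat.floor_le (by positivity)
        · exact two_rpow_le_numMessages n R
    _ = ((2 : ℝ) ^ (r - R)) ^ n := by
        rw [← Real.rpow_sub two_pos, ← sub_mul, Real.rpow_mul_natCast two_pos.le]

lemma weaklyAchievableDet.eventually_one_sub_div_le {p R r τ ε δ : ℝ} (h : weaklyAchievableDet p R)
    (hr0 : 0 ≤ r) (hr1 : r ≤ 1) (hτ0 : 0 < τ) (hτ : τ < 2 * p) (hε : 0 < ε) (hδ : 0 < δ) :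
    ∀ᶠ n : ℕ in atTop,
      1 - (1 - ⌊r * n⌋₊ / n) / (2 * τ) ≤ ((2 : ℝ) ^ (r - (R - δ))) ^ n + 2 * ε := by
  filter_upwards [h.eventually_exists_code hε hδ, eventually_lt_two_mul_floor hτ,
    eventually_gt_atTop 0] with n ⟨C, hC⟩ ⟨hTK, hTsq⟩ hn
  have hp : 0 ≤ p := by linarith
  have hn' : (0 : ℝ) < n := by exact_mod_cast hn
  have hM : (0 : ℝ) < numMessages n (R - δ) := by exact_mod_cast numMessages_pos n _
  have hcount := C.mul_sub_two_pow_le hC (Nat.floor_le (by positivity)) (by positivity) hTK hTsq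
    (Nat.floor_le_of_le (mul_le_of_le_one_left hn'.le hr1))
  calc 1 - (1 - ⌊r * n⌋₊ / n) / (2 * τ) = 1 - (n - ⌊r * n⌋₊) / (2 * (τ * n)) := by field_simp
    _ ≤ 2 ^ ⌊r * n⌋₊ / numMessages n (R - δ) + 2 * ε := by
        rw [div_add' _ _ _ hM.ne', le_div_iff₀ hM]
        linarith
    _ ≤ ((2 : ℝ) ^ (r - (R - δ))) ^ n + 2 * ε := by
        gcongr
        exact two_pow_floor_div_numMessages_le n hr0 (R - δ)

lemma weaklyAchievableDet.add_two_mul_le {p R r τ : ℝ} (h : weaklyAchievableDet p R) (hr0 : 0 ≤ r)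
    (hr1 : r ≤ 1) (hrR : r < R) (hτ0 : 0 < τ) (hτ : τ < 2 * p) : r + 2 * τ ≤ 1 := by
  have hlimit : ∀ ε > 0, 1 - (1 - r) / (2 * τ) ≤ 0 + ε := by
    intro ε hε
    have hδ : 0 < (R - r) / 2 := by linarith
    refine le_of_tendsto_of_tendsto ?_ ?_
      (h.eventually_one_sub_div_le hr0 hr1 hτ0 hτ (half_pos hε) hδ)
    · exact ((((tendsto_nat_floor_mul_div_atTop hr0).comp tendsto_natCast_atTop_atTop).const_sub
        1).div_const (2 * τ)).const_sub 1
    · rw [mul_div_cancel₀ ε two_ne_zero]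
      exact (tendsto_pow_atTop_nhds_zero_of_lt_one (by positivity)
        (Real.rpow_lt_one_of_one_lt_of_neg one_lt_two (by linarith))).add_const ε
  have hratio := le_of_forall_pos_le_add hlimit
  rw [sub_nonpos, one_le_div (by positivity)] at hratio
  linarith

lemma weaklyAchievableDet.le_max_one_sub_four_mul {p R : ℝ} (h : weaklyAchievableDet p R)
    (hp : 0 < p) : R ≤ max (1 - 4 * p) 0 := by
  by_contra! hlt
  obtain ⟨r, hr, hr'⟩ := exists_between
    (lt_min hlt (max_lt (by linarith : 1 - 4 * p < 1) one_pos))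
  obtain ⟨hr4, hr0⟩ := max_lt_iff.mp hr
  obtain ⟨hrR, hr1⟩ := lt_min_iff.mp hr'
  obtain ⟨τ, hτ, hτ'⟩ := exists_between (by linarith : (1 - r) / 2 < 2 * p)
  linarith [h.add_two_mul_le hr0.le hr1.le hrR (by linarith) hτ']

end PlotkinBound

theorem det_weak_capacity_upper_bound_general {p R : ℝ} (hp : p ∈ Set.Icc 0 1)
    (h : weaklyAchievableDet p R) : R ≤ min (1 - binaryEntropy p) (max (1 - 4 * p) 0) := by
  refine le_min (h.le_one_sub_binaryEntropy hp) ?_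
  rcases hp.1.eq_or_lt with rfl | hp0
  · simpa [binaryEntropy] using h.le_one_sub_binaryEntropy hp
  · exact h.le_max_one_sub_four_mul hp0

/-- Theorem 1: for every `p ∈ (0, 1/2)`, every rate `R ≥ 0` weakly achievable by
deterministic codes against causal adversaries with power `p` satisfies
`R ≤ min {1 − H(p), (1 − 4p)⁺}`. -/
theorem det_weak_capacity_upper_bound (p : ℝ) (hp0 : 0 < p) (hp1 : p < 1 / 2)
    (R : ℝ) (hR : 0 ≤ R) (hach : weaklyAchievableDet p R) :
    R ≤ min (1 - binaryEntropy p) (max (1 - 4 * p) 0) := by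
  exact det_weak_capacity_upper_bound_general ⟨hp0.le, by linarith⟩ hach
end

section
/- For every p ∈ (0, 1/2] and every ε > 0 there exist a constant c > 0, an exponent k ∈ ℕ, and N ∈ ℕ such that for every n ≥ N the following holds: for every probabilistic (n, Rn)-code with rate R = max(1 − 4p, 0) + ε there exists a causal adversary with power p against which the probability of error of the code is at least c · n^{−k}. (Quantitative form of Theorem 2: the adversary forces decoding error at least 1/poly(n) for probabilistic codes above rate (1−4p)^+.) -/
open Finset

/-- The Shannon entropy (base 2) of a finitely supported probability distribution.
(Since `Real.logb 2 0 = 0`, terms with `q a = 0` contribute `0`, so this agrees with the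
sum over the support.) -/
noncomputable def entropy2 {α : Type*} [Fintype α] (q : α → ℝ) : ℝ :=
  ∑ a, -(q a * Real.logb 2 (q a))

/-- A probabilistic `(n, R n)`-code: a message random variable `U` over a finite alphabet
of size at most `2^n` with entropy `R n`, a randomized encoder drawing, for each message
`u`, a codeword in `{0,1}^n` from the distribution `encDist u`, and a possibly randomized
decoder. -/
structure ProbCode (n : ℕ) (R : ℝ) where
  U : Type
  [instU : Fintype U]
  card_le : Fintype.card U ≤ 2 ^ n
  pU : U → ℝ
  pU_nonneg : ∀ u, 0 ≤ pU u
  pU_sum : ∑ u, pU u = 1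
  pU_entropy : entropy2 pU = R * n
  encDist : U → (Fin n → Bool) → ℝ
  encDist_nonneg : ∀ u x, 0 ≤ encDist u x
  encDist_sum : ∀ u, ∑ x, encDist u x = 1
  dec : (Fin n → Bool) → U → ℝ
  dec_nonneg : ∀ y u, 0 ≤ dec y u
  dec_sum : ∀ y, ∑ u, dec y u = 1

attribute [instance] ProbCode.instU

/-- The probability of error of a probabilistic code against a causal adversary: the
probability, over the message `U`, the encoder's randomness, the adversary's randomness,
and the decoder's randomness, that the decoded message differs from the transmitted one. -/
noncomputable def ProbCode.errProb {n : ℕ} {R p : ℝ} (C : ProbCode n R)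
    (A : CausalAdversary n p) : ℝ :=
  ∑ u, ∑ x, ∑ j, C.pU u * C.encDist u x * A.μ j * (1 - C.dec (A.received x j) u)

/-!
The adversary stays idle until it has seen slightly more than `(1 - 4p)⁺ n` symbols. The rate
exceeds what these symbols can reveal, so with probability bounded below the message is one whose
posterior probability is small. Two independent samples from the posterior of message and codeword
then tend to carry different messages, and since fewer than `4pn` positions remain, Plotkin's
averaging shows that with probability bounded below they differ in at most `2pn` of them. Knowing
what it has seen, the adversary picks a target codeword and flips, according to a fair coin, the
first or the second `pn` of the positions where the transmitted word differs from the target.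
Pushing `x` towards `x'` with one outcome of the coin gives the same word as pushing `x'` towards
`x` with the other outcome, so the decoder cannot serve both messages. Averaging over the targets
makes one of them work for each observation.
-/

section RankBlock

variable {ι : Type*} [LinearOrder ι]

/-- The rank of a position `i` in `D`: how many elements of `D` precede it. -/
def rankIn (D : Finset ι) (i : ι) : ℕ := #{k ∈ D | k < i}

/-- The first (`b = false`) or second (`b = true`) run of `t` consecutive elements of `D`, cut
short when `D` is exhausted: the positions an adversary with budget `t` flips when `D` is the set
of positions it could usefully flip and `b` is its private coin. -/
def rankBlock (D : Finset ι) (t : ℕ) (b : Bool) : Finset ι :=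
  {i ∈ D | rankIn D i ∈ if b then Ico t (2 * t) else range t}

lemma rankIn_strictMonoOn (D : Finset ι) : StrictMonoOn (rankIn D) D := fun i hi j _ hij =>
  card_lt_card <| (ssubset_iff_of_subset <| monotone_filter_right D fun _ _ hk => hk.trans hij).2
    ⟨i, by simpa [hij] using hi, by simp⟩

lemma rankIn_lt_card {D : Finset ι} {i : ι} (hi : i ∈ D) : rankIn D i < #D :=
  card_lt_card <| filter_ssubset.2 ⟨i, hi, lt_irrefl i⟩

lemma card_rankBlock_le (D : Finset ι) (t : ℕ) (b : Bool) : #(rankBlock D t b) ≤ t := by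
  have hcard : #(if b then Ico t (2 * t) else range t) = t := by
    cases b
    · simp
    · simp [two_mul]
  refine (card_le_card_of_injOn (rankIn D) (fun i hi => (mem_filter.mp hi).2) ?_).trans_eq hcard
  exact (rankIn_strictMonoOn D).injOn.mono fun i hi => (mem_filter.mp hi).1

lemma rankBlock_not {D : Finset ι} {t : ℕ} (hD : #D ≤ 2 * t) (b : Bool) :
    rankBlock D t (!b) = D \ rankBlock D t b := by
  ext i
  simp only [rankBlock, mem_sdiff, mem_filter]
  refine ⟨fun ⟨hi, hr⟩ => ⟨hi, fun h => ?_⟩, fun ⟨hi, hr⟩ => ⟨hi, ?_⟩⟩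
  · cases b <;> simp_all <;> lia
  · have := rankIn_lt_card hi
    cases b <;> simp_all <;> lia

lemma mem_rankBlock_congr {D E : Finset ι} {i : ι} (h : ∀ k ≤ i, k ∈ D ↔ k ∈ E) (t : ℕ)
    (b : Bool) : i ∈ rankBlock D t b ↔ i ∈ rankBlock E t b := by
  have hrank : rankIn D i = rankIn E i := congrArg card <| by
    ext k
    simpa only [mem_filter] using and_congr_left fun hk => h k (le_of_lt hk)
  simp only [rankBlock, mem_filter, hrank, h i le_rfl]

end RankBlock

section Words

variable {ι β : Type*} [DecidableEq β]

/-- The positions in `S` at which the words `x` and `y` differ. -/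
def diffOn (S : Finset ι) (x y : ι → β) : Finset ι := {i ∈ S | x i ≠ y i}

lemma diffOn_comm (S : Finset ι) (x y : ι → β) : diffOn S x y = diffOn S y x := by
  simp only [diffOn, ne_comm]

/-- The word obtained from `x` by moving towards `y` within `S`: one of the two runs of `t`
consecutive positions where they differ, selected by `b`, is overwritten by `y`. -/
def pushTowards [LinearOrder ι] (S : Finset ι) (t : ℕ) (x y : ι → β) (b : Bool) : ι → β :=
  (rankBlock (diffOn S x y) t b).piecewise y x

lemma pushTowards_comm [LinearOrder ι] {S : Finset ι} {t : ℕ} {x y : ι → β}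
    (hxy : ∀ i ∉ S, x i = y i) (hd : #(diffOn S x y) ≤ 2 * t) (b : Bool) :
    pushTowards S t y x b = pushTowards S t x y (!b) := by
  unfold pushTowards
  rw [diffOn_comm S y x, rankBlock_not hd]
  ext i
  by_cases hi : i ∈ diffOn S x y
  · by_cases hb : i ∈ rankBlock (diffOn S x y) t b <;> simp [hi, hb]
  · have heq : x i = y i := by
      by_cases hS : i ∈ S
      · by_contra hne
        exact hi (mem_filter.mpr ⟨hS, hne⟩)
      · exact hxy i hS
    simp [piecewise, heq]

end Words

section Averaging

variable {Ω ι : Type*}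

lemma sum_mul_ite_ne_le (L : Finset Ω) (w : Ω → ℝ) (c : Ω → Bool) :
    ∑ ω ∈ L, ∑ ω' ∈ L, w ω * w ω' * (if c ω ≠ c ω' then 1 else 0) ≤ (∑ ω ∈ L, w ω) ^ 2 / 2 := by
  let σ : Ω → ℝ := fun ω => if c ω then 1 else -1
  have hsign (ω ω' : Ω) : w ω * w ω' * (if c ω ≠ c ω' then 1 else 0) =
      1 / 2 * (w ω * w ω') - 1 / 2 * ((w ω * σ ω) * (w ω' * σ ω')) := by
    simp only [σ]
    cases c ω <;> cases c ω' <;> simp <;> ring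
  simp only [hsign, sum_sub_distrib, ← mul_sum, ← sum_mul]
  nlinarith [sq_nonneg (∑ ω ∈ L, w ω * σ ω)]

/-- Plotkin's double count, taken position by position. -/
lemma sum_mul_card_diffOn_le (L : Finset Ω) (w : Ω → ℝ) (X : Ω → ι → Bool) (S : Finset ι) :
    ∑ ω ∈ L, ∑ ω' ∈ L, w ω * w ω' * #(diffOn S (X ω) (X ω')) ≤ #S / 2 * (∑ ω ∈ L, w ω) ^ 2 := by
  calc ∑ ω ∈ L, ∑ ω' ∈ L, w ω * w ω' * (#(diffOn S (X ω) (X ω')) : ℝ)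
      = ∑ i ∈ S, ∑ ω ∈ L, ∑ ω' ∈ L, w ω * w ω' * (if X ω i ≠ X ω' i then 1 else 0) := by
        simp only [diffOn, card_filter, Nat.cast_sum, Nat.cast_ite, Nat.cast_one, Nat.cast_zero,
          mul_sum]
        exact (sum_congr rfl fun ω _ => sum_comm).trans sum_comm
    _ ≤ ∑ _i ∈ S, (∑ ω ∈ L, w ω) ^ 2 / 2 := sum_le_sum fun i _ => sum_mul_ite_ne_le L w (X · i)
    _ = #S / 2 * (∑ ω ∈ L, w ω) ^ 2 := by
        rw [sum_const, nsmul_eq_mul]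
        ring

lemma sum_mul_symm_add (L : Finset Ω) (w : Ω → ℝ) (k : Ω → Ω → ℝ) :
    ∑ ω ∈ L, ∑ ω' ∈ L, w ω * w ω' * (k ω ω' + k ω' ω) =
      2 * ∑ ω' ∈ L, w ω' * ∑ ω ∈ L, w ω * k ω ω' := by
  have hswap : ∑ ω ∈ L, ∑ ω' ∈ L, w ω * w ω' * k ω ω' = ∑ ω ∈ L, ∑ ω' ∈ L, w ω * w ω' * k ω' ω :=
    sum_comm.trans <| sum_congr rfl fun _ _ => sum_congr rfl fun _ _ => by ring
  simp only [mul_add, sum_add_distrib, hswap, mul_sum]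
  rw [← two_mul, mul_sum]
  simp only [mul_sum, mul_assoc]

section PairLoss

variable {U : Type*} [DecidableEq U] {L : Finset Ω} {w : Ω → ℝ} (hw : ∀ ω, 0 ≤ w ω)
  (lab : Ω → U) {δ : ℝ} (hlight : ∀ ω ∈ L, ∑ ω' ∈ L with lab ω' = lab ω, w ω' ≤ δ)

include hw hlight

lemma sum_mul_ite_eq_le : ∑ ω ∈ L, ∑ ω' ∈ L, w ω * w ω' * (if lab ω' = lab ω then 1 else 0) ≤
    δ * ∑ ω ∈ L, w ω := by
  rw [mul_sum]
  refine sum_le_sum fun ω hω => ?_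
  simp only [← mul_sum, mul_boole, ← sum_filter]
  rw [mul_comm]
  exact mul_le_mul_of_nonneg_right (hlight ω hω) (hw ω)

variable (X : Ω → ι → Bool) {S : Finset ι} {m : ℕ} (hm : 0 < m)

include hm

/-- Among all pairs of samples, those with equal labels are rare by `hlight`, those that are far
apart are controlled by `sum_mul_card_diffOn_le`, and the others pay a loss of at least `1`. -/
lemma sq_sum_le_of_one_le_pair_loss {k : Ω → Ω → ℝ} (hk : ∀ ω ω', 0 ≤ k ω ω')
    (hpair : ∀ ω ∈ L, ∀ ω' ∈ L, lab ω ≠ lab ω' → #(diffOn S (X ω) (X ω')) < m →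
      1 ≤ k ω ω' + k ω' ω) :
    (1 - #S / (2 * m)) * (∑ ω ∈ L, w ω) ^ 2 ≤
      δ * ∑ ω ∈ L, w ω + 2 * ∑ ω' ∈ L, w ω' * ∑ ω ∈ L, w ω * k ω ω' := by
  have hm' : (0 : ℝ) < m := mod_cast hm
  have hcover : ∀ ω ∈ L, ∀ ω' ∈ L, 1 ≤ (if lab ω' = lab ω then 1 else 0) +
      #(diffOn S (X ω) (X ω')) * (m : ℝ)⁻¹ + (k ω ω' + k ω' ω) := by
    intro ω hω ω' hω'
    have hdist : 0 ≤ #(diffOn S (X ω) (X ω')) * (m : ℝ)⁻¹ := by positivity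
    have hloss := add_nonneg (hk ω ω') (hk ω' ω)
    by_cases hlab : lab ω' = lab ω
    · rw [if_pos hlab]
      linarith
    rw [if_neg hlab]
    by_cases hclose : #(diffOn S (X ω) (X ω')) < m
    · linarith [hpair ω hω ω' hω' (Ne.symm hlab) hclose]
    · have : 1 ≤ #(diffOn S (X ω) (X ω')) * (m : ℝ)⁻¹ := by
        rw [← div_eq_mul_inv, one_le_div hm']
        exact_mod_cast not_lt.mp hclose
      linarith
  have hsame := sum_mul_ite_eq_le hw lab hlight
  have hfar := mul_le_mul_of_nonneg_right (sum_mul_card_diffOn_le L w X S) (inv_pos.mpr hm').le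
  have htotal : (∑ ω ∈ L, w ω) ^ 2 ≤ ∑ ω ∈ L, ∑ ω' ∈ L, w ω * w ω' *
      ((if lab ω' = lab ω then 1 else 0) + #(diffOn S (X ω) (X ω')) * (m : ℝ)⁻¹ +
        (k ω ω' + k ω' ω)) := by
    rw [pow_two, sum_mul_sum]
    exact sum_le_sum fun ω hω => sum_le_sum fun ω' hω' =>
      le_mul_of_one_le_right (mul_nonneg (hw ω) (hw ω')) (hcover ω hω ω' hω')
  simp only [mul_add _ (_ + _), mul_add _ (ite _ _ _), sum_add_distrib, ← mul_assoc, ← sum_mul]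
    at htotal hfar
  rw [sum_mul_symm_add] at htotal
  have hratio : #S / 2 * (∑ ω ∈ L, w ω) ^ 2 * (m : ℝ)⁻¹ =
      #S / (2 * m) * (∑ ω ∈ L, w ω) ^ 2 := by field_simp
  linarith

/-- The best fixed target costs at least as much as the random target `X ω'`. -/
lemma exists_target_le_loss [Finite ι] (hδ : 0 ≤ δ) {e : Ω → (ι → Bool) → ℝ}
    (he : ∀ ω y, 0 ≤ e ω y)
    (hpair : ∀ ω ∈ L, ∀ ω' ∈ L, lab ω ≠ lab ω' → #(diffOn S (X ω) (X ω')) < m →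
      1 ≤ e ω (X ω') + e ω' (X ω)) :
    ∃ y, (1 - #S / (2 * m)) * ∑ ω ∈ L, w ω ≤ δ + 2 * ∑ ω ∈ L, w ω * e ω y := by
  obtain ⟨y, hy⟩ := Finite.exists_max fun y => ∑ ω ∈ L, w ω * e ω y
  refine ⟨y, ?_⟩
  have hsq := sq_sum_le_of_one_le_pair_loss hw lab hlight X hm (fun ω ω' => he ω (X ω')) hpair
  have hmax : ∑ ω' ∈ L, w ω' * ∑ ω ∈ L, w ω * e ω (X ω') ≤
      (∑ ω ∈ L, w ω) * ∑ ω ∈ L, w ω * e ω y := by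
    rw [sum_mul]
    exact sum_le_sum fun ω' _ => mul_le_mul_of_nonneg_left (hy (X ω')) (hw ω')
  have hloss : 0 ≤ ∑ ω ∈ L, w ω * e ω y := sum_nonneg fun ω _ => mul_nonneg (hw ω) (he ω y)
  rcases (sum_nonneg fun ω _ => hw ω : 0 ≤ ∑ ω ∈ L, w ω).eq_or_lt with hzero | hpos
  · rw [← hzero]
    linarith
  · refine le_of_mul_le_mul_left ?_ hpos
    linarith

end PairLoss

lemma card_filter_sum_lt_mul_le {U : Type*} [Fintype U] {f : U → ℝ} (hf : ∀ u, 0 ≤ f u) (k : ℕ) :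
    #{u | ∑ v, f v < k * f u} ≤ k := by
  by_contra! hlt
  have hstrict : #{u | ∑ v, f v < k * f u} * ∑ v, f v < k * ∑ u with ∑ v, f v < k * f u, f u := by
    rw [← nsmul_eq_mul, ← sum_const, mul_sum]
    exact sum_lt_sum_of_nonempty (card_pos.mp (by lia)) fun u hu => (mem_filter.mp hu).2
  have hpart : ∑ u with ∑ v, f v < k * f u, f u ≤ ∑ v, f v :=
    sum_le_sum_of_subset_of_nonneg (subset_univ _) fun u _ _ => hf u
  refine hstrict.not_ge ?_
  gcongr
  exact sum_nonneg fun u _ => hf u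

end Averaging

section Entropy

variable {α : Type*} [Fintype α] {q : α → ℝ}

lemma entropy2_le_sum_neg_mul_logb (hq : ∀ a, 0 ≤ q a) {r : α → ℝ} (hr : ∀ a, 0 < r a)
    (hsum : ∑ a, r a ≤ ∑ a, q a) :
    entropy2 q ≤ ∑ a, -(q a * Real.logb 2 (r a)) := by
  have hterm (a : α) : q a * Real.log (r a) - q a * Real.log (q a) ≤ r a - q a := by
    rcases (hq a).eq_or_lt with hzero | hpos
    · simp [← hzero, (hr a).le]
    · calc q a * Real.log (r a) - q a * Real.log (q a) = q a * Real.log (r a / q a) := by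
            rw [Real.log_div (hr a).ne' hpos.ne', mul_sub]
        _ ≤ q a * (r a / q a - 1) :=
            mul_le_mul_of_nonneg_left (Real.log_le_sub_one_of_pos (div_pos (hr a) hpos)) hpos.le
        _ = r a - q a := by field_simp
  have htotal := sum_le_sum fun a (_ : a ∈ univ) => hterm a
  simp only [sum_sub_distrib] at htotal
  simp only [entropy2, Real.logb, ← mul_div_assoc, ← neg_div, ← sum_div, sum_neg_distrib]
  exact div_le_div_of_nonneg_right (by linarith) (Real.log_nonneg one_le_two)

/-- Gibbs' inequality against the prefix code in which one bit tells whether the symbol lies in `A`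
and `a`, respectively `b`, further bits identify it. -/
lemma entropy2_le_of_card_le [DecidableEq α] (hq : q ∈ stdSimplex ℝ α) {A : Finset α} {a b : ℕ}
    (hA : #A ≤ 2 ^ a) (hAc : #Aᶜ ≤ 2 ^ b) :
    entropy2 q ≤ 1 + (∑ u ∈ A, q u) * a + (∑ u ∈ Aᶜ, q u) * b := by
  let len : α → ℕ := fun u => 1 + if u ∈ A then a else b
  have hkraft_part {B : Finset α} {c : ℕ} (hB : #B ≤ 2 ^ c) (hlen : ∀ u ∈ B, len u = 1 + c) :
      ∑ u ∈ B, ((2 : ℝ) ^ len u)⁻¹ ≤ 1 / 2 := by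
    have hB' : (#B : ℝ) ≤ 2 ^ c := mod_cast hB
    rw [sum_congr rfl fun u hu => by rw [hlen u hu], sum_const, nsmul_eq_mul, ← div_eq_mul_inv,
      div_le_iff₀ (by positivity), pow_add]
    linarith
  have hlenA : ∀ u ∈ A, len u = 1 + a := fun u hu => by simp [len, hu]
  have hlenAc : ∀ u ∈ Aᶜ, len u = 1 + b := fun u hu => by simp [len, mem_compl.mp hu]
  have hkraft : ∑ u, ((2 : ℝ) ^ len u)⁻¹ ≤ 1 := by
    rw [← sum_add_sum_compl A]
    linarith [hkraft_part hA hlenA, hkraft_part hAc hlenAc]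
  have hsplit : ∑ u ∈ A, q u + ∑ u ∈ Aᶜ, q u = 1 := (sum_add_sum_compl A q).trans hq.2
  calc entropy2 q ≤ ∑ u, -(q u * Real.logb 2 ((2 ^ len u)⁻¹)) :=
        entropy2_le_sum_neg_mul_logb hq.1 (fun u => by positivity) (hkraft.trans_eq hq.2.symm)
    _ = ∑ u ∈ A, q u * len u + ∑ u ∈ Aᶜ, q u * len u := by
        simp [Real.logb_inv, Real.logb_pow, sum_add_sum_compl]
    _ = (∑ u ∈ A, q u) * (1 + a) + (∑ u ∈ Aᶜ, q u) * (1 + b) := by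
        rw [sum_mul, sum_mul]
        congr 1
        · exact sum_congr rfl fun u hu => by simp [hlenA u hu]
        · exact sum_congr rfl fun u hu => by simp [hlenAc u hu]
    _ = 1 + (∑ u ∈ A, q u) * a + (∑ u ∈ Aᶜ, q u) * b := by linear_combination hsplit

end Entropy

section Adversary

variable {n : ℕ} {p : ℝ}

/-- The word extending the prefix `w` by `false`; a jamming rule that is causal as a function of
whole words can be evaluated on it. -/
def extendPrefix (i : Fin n) (w : Fin (i.1 + 1) → Bool) : Fin n → Bool :=
  fun k => if h : k.1 < i.1 + 1 then w ⟨k.1, h⟩ else false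

lemma extendPrefix_wordPrefix (x : Fin n → Bool) {i k : Fin n} (h : k ≤ i) :
    extendPrefix i (wordPrefix x i) k = x k := by
  simp [extendPrefix, wordPrefix, Nat.lt_succ_of_le h]

namespace CausalAdversary

/-- The adversary that flips the positions `F j x`, when whether `i ∈ F j x` depends only on the
symbols of `x` up to `i`. -/
def ofFlips {J : Type} [Fintype J] {μ : J → ℝ} (hμ : μ ∈ stdSimplex ℝ J)
    (F : J → (Fin n → Bool) → Finset (Fin n))
    (causal : ∀ j x y i, (∀ k ≤ i, x k = y k) → (i ∈ F j x ↔ i ∈ F j y))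
    (power : ∀ j x, (#(F j x) : ℝ) ≤ p * n) : CausalAdversary n p where
  J := J
  μ := μ
  μ_nonneg := hμ.1
  μ_sum := hμ.2
  g i w j := decide (i ∈ F j (extendPrefix i w))
  power x j := by
    simpa only [decide_eq_true_eq, filter_univ_mem,
      causal j _ x _ fun _ hk => extendPrefix_wordPrefix x hk] using power j x

lemma received_ofFlips {J : Type} [Fintype J] {μ : J → ℝ} (hμ : μ ∈ stdSimplex ℝ J)
    (F : J → (Fin n → Bool) → Finset (Fin n))
    (causal : ∀ j x y i, (∀ k ≤ i, x k = y k) → (i ∈ F j x ↔ i ∈ F j y))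
    (power : ∀ j x, (#(F j x) : ℝ) ≤ p * n) (x : Fin n → Bool) (j : J) :
    (ofFlips hμ F causal power).received x j = fun i => xor (x i) (decide (i ∈ F j x)) := by
  funext i
  simp only [received, ofFlips, causal j _ x i fun _ hk => extendPrefix_wordPrefix x hk]

end CausalAdversary

variable {S : Finset (Fin n)} (hS : IsUpperSet (S : Set (Fin n))) {t : ℕ} (ht : (t : ℝ) ≤ p * n)
  (f : ((Sᶜ : Finset (Fin n)) → Bool) → Fin n → Bool)

/-- The adversary that stays idle outside the final segment `S`, then picks the target word
`f z` determined by the word `z` observed so far, and pushes the transmitted word towards it, using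
a fair coin to choose which half of the differences to flip. -/
noncomputable def pushAdversary : CausalAdversary n p :=
  .ofFlips (J := Bool) (μ := fun _ => 1 / 2) ⟨fun _ => by norm_num, by simp⟩
    (fun b x => rankBlock (diffOn S x (f (Sᶜ.restrict x))) t b)
    (by
      intro b x y i hxy
      by_cases hi : i ∈ S
      · have hobs : Sᶜ.restrict x = Sᶜ.restrict y := by
          funext ⟨k, hk⟩
          exact hxy k (le_of_not_ge fun hik => mem_compl.mp hk (hS hik hi))
        rw [hobs]
        refine mem_rankBlock_congr (fun k hk => ?_) t b
        simp only [diffOn, mem_filter, hxy k hk]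
      · simp [rankBlock, diffOn, hi])
    (fun b x => ht.trans' (mod_cast card_rankBlock_le _ t b))

lemma received_pushAdversary (x : Fin n → Bool) (b : Bool) :
    (pushAdversary hS ht f).received x b = pushTowards S t x (f (Sᶜ.restrict x)) b := by
  refine (CausalAdversary.received_ofFlips ..).trans (funext fun i => ?_)
  by_cases hi : i ∈ rankBlock (diffOn S x (f (Sᶜ.restrict x))) t b
  · have hne : x i ≠ f (Sᶜ.restrict x) i := (mem_filter.mp (mem_filter.mp hi).1).2
    simpa [pushTowards, hi] using Bool.not_eq.mpr hne
  · simp [pushTowards, hi]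

end Adversary

namespace ProbCode

variable {n : ℕ} {R : ℝ} (C : ProbCode n R) (S : Finset (Fin n)) (t s : ℕ)

/-- The joint distribution of the message and the transmitted codeword. -/
def joint (ω : C.U × (Fin n → Bool)) : ℝ := C.pU ω.1 * C.encDist ω.1 ω.2

lemma joint_nonneg (ω : C.U × (Fin n → Bool)) : 0 ≤ C.joint ω :=
  mul_nonneg (C.pU_nonneg _) (C.encDist_nonneg _ _)

lemma sum_joint_filter_fst (q : C.U → Prop) [DecidablePred q] :
    ∑ ω with q ω.1, C.joint ω = ∑ u with q u, C.pU u := by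
  simp only [sum_filter, Fintype.sum_prod_type, joint, sum_ite_irrel, sum_const_zero, ← mul_sum,
    C.encDist_sum, mul_one]

lemma sum_joint : ∑ ω, C.joint ω = 1 := by
  simpa using (C.sum_joint_filter_fst fun _ => True).trans (by simp [C.pU_sum])

lemma dec_le_one (y : Fin n → Bool) (u : C.U) : C.dec y u ≤ 1 :=
  C.dec_sum y ▸ single_le_sum (fun u _ => C.dec_nonneg y u) (mem_univ u)

lemma dec_add_dec_le_one (y : Fin n → Bool) {u u' : C.U} (h : u ≠ u') :
    C.dec y u + C.dec y u' ≤ 1 := by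
  classical
  rw [← C.dec_sum y, ← sum_pair h]
  exact sum_le_sum_of_subset_of_nonneg (subset_univ _) fun u _ _ => C.dec_nonneg y u

/-- The probability that message `ω.1` is decoded wrongly when its codeword `ω.2` is pushed towards
`y` by a fair choice between the two blocks of differences. -/
noncomputable def pushLoss (ω : C.U × (Fin n → Bool)) (y : Fin n → Bool) : ℝ :=
  ∑ b, 1 / 2 * (1 - C.dec (pushTowards S t ω.2 y b) ω.1)

lemma pushLoss_nonneg (ω : C.U × (Fin n → Bool)) (y : Fin n → Bool) : 0 ≤ C.pushLoss S t ω y :=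
  sum_nonneg fun _ _ => mul_nonneg (by norm_num) (sub_nonneg.mpr (C.dec_le_one _ _))

/-- Both ways of pushing `ω.2` towards `ω'.2` give the same words as pushing `ω'.2` towards `ω.2`,
so whatever the decoder outputs is wrong for `ω` or for `ω'`. -/
lemma one_le_pushLoss_add_pushLoss {ω ω' : C.U × (Fin n → Bool)} (hne : ω.1 ≠ ω'.1)
    (hobs : ∀ i ∉ S, ω.2 i = ω'.2 i) (hd : #(diffOn S ω.2 ω'.2) ≤ 2 * t) :
    1 ≤ C.pushLoss S t ω ω'.2 + C.pushLoss S t ω' ω.2 := by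
  simp only [pushLoss, pushTowards_comm hobs hd, Fintype.sum_bool, Bool.not_true, Bool.not_false]
  linarith [C.dec_add_dec_le_one (pushTowards S t ω.2 ω'.2 true) hne,
    C.dec_add_dec_le_one (pushTowards S t ω.2 ω'.2 false) hne]

lemma errProb_pushAdversary {S : Finset (Fin n)} (hS : IsUpperSet (S : Set (Fin n))) {p : ℝ}
    {t : ℕ} (ht : (t : ℝ) ≤ p * n) (f : ((Sᶜ : Finset (Fin n)) → Bool) → Fin n → Bool) :
    C.errProb (pushAdversary hS ht f) =
      ∑ ω, C.joint ω * C.pushLoss S t ω (f (Sᶜ.restrict ω.2)) := by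
  rw [Fintype.sum_prod_type]
  refine sum_congr rfl fun u _ => sum_congr rfl fun x _ => ?_
  rw [pushLoss, mul_sum]
  refine sum_congr rfl fun b _ => ?_
  rw [← mul_assoc, ← received_pushAdversary hS ht f x b]
  rfl

section LightMessages

/-- The message-codeword pairs compatible with observing the word `z` outside `S`. -/
def compatible (z : (Sᶜ : Finset (Fin n)) → Bool) :
    Finset (C.U × (Fin n → Bool)) :=
  {ω | Sᶜ.restrict ω.2 = z}

lemma sum_sum_compatible (g : C.U × (Fin n → Bool) → ℝ) :
    ∑ z, ∑ ω ∈ C.compatible S z, g ω = ∑ ω, g ω :=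
  sum_fiberwise univ (fun ω => Sᶜ.restrict ω.2) g

variable [DecidableEq C.U]

/-- The messages whose posterior probability is at most `2⁻ˢ` whatever is observed outside `S`. -/
noncomputable def lightMessages : Finset C.U :=
  {u | ∀ z, 2 ^ s * ∑ ω ∈ C.compatible S z with ω.1 = u, C.joint ω ≤
    ∑ ω ∈ C.compatible S z, C.joint ω}

lemma card_compl_lightMessages_le : #(C.lightMessages S s)ᶜ ≤ 2 ^ (#Sᶜ + s) := by
  have hunion : (C.lightMessages S s)ᶜ = univ.biUnion fun z =>
      {u | ∑ ω ∈ C.compatible S z, C.joint ω <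
        2 ^ s * ∑ ω ∈ C.compatible S z with ω.1 = u, C.joint ω} := by
    ext u
    simp [lightMessages]
  have hobs : #(univ : Finset ((Sᶜ : Finset (Fin n)) → Bool)) = 2 ^ #Sᶜ := by
    rw [card_univ, Fintype.card_fun, Fintype.card_coe, Fintype.card_bool]
  rw [hunion, pow_add, ← hobs]
  refine card_biUnion_le_card_mul _ _ _ fun z _ => ?_
  have hmarkov := card_filter_sum_lt_mul_le
    (f := fun u => ∑ ω ∈ C.compatible S z with ω.1 = u, C.joint ω)
    (fun u => sum_nonneg fun ω _ => C.joint_nonneg ω) (2 ^ s)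
  simpa only [sum_fiberwise (C.compatible S z) Prod.fst C.joint, Nat.cast_pow, Nat.cast_ofNat]
    using hmarkov

/-- The messages that are not light are too few to carry all the entropy. -/
lemma rate_mul_le : R * n ≤ 1 + (#Sᶜ + s) + (∑ u ∈ C.lightMessages S s, C.pU u) * n := by
  have hent := entropy2_le_of_card_le ⟨C.pU_nonneg, C.pU_sum⟩
    (C.card_compl_lightMessages_le S s) ((card_le_univ _).trans C.card_le)
  have hmass : ∑ u ∈ (C.lightMessages S s)ᶜ, C.pU u ≤ 1 :=
    C.pU_sum ▸ sum_le_sum_of_subset_of_nonneg (subset_univ _) fun u _ _ => C.pU_nonneg u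
  rw [C.pU_entropy, compl_compl, Nat.cast_add] at hent
  linarith [mul_le_of_le_one_left (by positivity : (0 : ℝ) ≤ #Sᶜ + s) hmass]

lemma exists_target_le_pushLoss (z : (Sᶜ : Finset (Fin n)) → Bool) :
    ∃ y, (1 - #S / (2 * (2 * t + 1 : ℕ))) *
        ∑ ω ∈ C.compatible S z with ω.1 ∈ C.lightMessages S s, C.joint ω ≤
      (2 ^ s)⁻¹ * ∑ ω ∈ C.compatible S z, C.joint ω +
        2 * ∑ ω ∈ C.compatible S z, C.joint ω * C.pushLoss S t ω y := by
  set L := {ω ∈ C.compatible S z | ω.1 ∈ C.lightMessages S s}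
  have hLz : L ⊆ C.compatible S z := filter_subset _ _
  have hlight : ∀ ω ∈ L, ∑ ω' ∈ L with ω'.1 = ω.1, C.joint ω' ≤
      (2 ^ s)⁻¹ * ∑ ω ∈ C.compatible S z, C.joint ω := by
    intro ω hω
    rw [← div_eq_inv_mul, le_div_iff₀' (by positivity)]
    refine ((mem_filter.mp (mem_filter.mp hω).2).2 z).trans' ?_
    gcongr
    exact fun ω _ _ => C.joint_nonneg ω
  have hobs : ∀ ω ∈ L, ∀ ω' ∈ L, ∀ i ∉ S, ω.2 i = ω'.2 i := fun ω hω ω' hω' i hi =>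
    congrFun ((mem_filter.mp (hLz hω)).2.trans (mem_filter.mp (hLz hω')).2.symm)
      ⟨i, mem_compl.mpr hi⟩
  obtain ⟨y, hy⟩ := exists_target_le_loss C.joint_nonneg Prod.fst hlight Prod.snd
    (Nat.succ_pos (2 * t))
    (mul_nonneg (by positivity) (sum_nonneg fun ω _ => C.joint_nonneg ω)) (C.pushLoss_nonneg S t)
    fun ω hω ω' hω' hne hd => C.one_le_pushLoss_add_pushLoss S t hne (hobs ω hω ω' hω')
      (Nat.lt_succ_iff.mp hd)
  refine ⟨y, hy.trans ?_⟩
  gcongr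
  exact fun ω _ _ => mul_nonneg (C.joint_nonneg ω) (C.pushLoss_nonneg S t ω y)

lemma exists_le_errProb {S : Finset (Fin n)} (hS : IsUpperSet (S : Set (Fin n))) {p : ℝ}
    {t : ℕ} (ht : (t : ℝ) ≤ p * n) :
    ∃ A : CausalAdversary n p, (1 - #S / (2 * (2 * t + 1 : ℕ))) *
      ∑ u ∈ C.lightMessages S s, C.pU u ≤ (2 ^ s)⁻¹ + 2 * C.errProb A := by
  choose f hf using C.exists_target_le_pushLoss S t s
  refine ⟨pushAdversary hS ht f, ?_⟩
  have hlight : ∑ z, ∑ ω ∈ C.compatible S z with ω.1 ∈ C.lightMessages S s, C.joint ω =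
      ∑ u ∈ C.lightMessages S s, C.pU u := by
    simp only [sum_filter, sum_sum_compatible]
    rw [← sum_filter, C.sum_joint_filter_fst (· ∈ C.lightMessages S s), filter_univ_mem]
  have herr : C.errProb (pushAdversary hS ht f) =
      ∑ z, ∑ ω ∈ C.compatible S z, C.joint ω * C.pushLoss S t ω (f z) := by
    rw [errProb_pushAdversary, ← sum_sum_compatible C S]
    refine sum_congr rfl fun z _ => sum_congr rfl fun ω hω => ?_
    rw [(mem_filter.mp hω).2]
  have htotal := sum_le_sum fun z (_ : z ∈ univ) => hf z
  rwa [sum_add_distrib, ← mul_sum, ← mul_sum, ← mul_sum, hlight, sum_sum_compatible, sum_joint,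
    mul_one, ← herr] at htotal

end LightMessages

end ProbCode

section Parameters

/-- The last `n - ℓ` positions of a word of length `n`, during which an adversary that waits for
`ℓ` symbols is active. -/
def finalSegment (n ℓ : ℕ) : Finset (Fin n) := {i | ℓ ≤ i.1}

lemma isUpperSet_finalSegment (n ℓ : ℕ) : IsUpperSet (finalSegment n ℓ : Set (Fin n)) := by
  intro i j hij hi
  simp only [finalSegment, coe_filter, mem_univ, true_and, Set.mem_ofPred_eq] at hi ⊢
  exact hi.trans hij

lemma card_compl_finalSegment (n ℓ : ℕ) : #(finalSegment n ℓ)ᶜ = min n ℓ := by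
  simp only [finalSegment, compl_filter, not_le, Fin.card_filter_val_lt]

lemma card_finalSegment (n ℓ : ℕ) : #(finalSegment n ℓ) = n - ℓ := by
  have := card_add_card_compl (finalSegment n ℓ)
  rw [card_compl_finalSegment, Fintype.card_fin] at this
  lia

variable {p ε : ℝ} {n ℓ : ℕ}

/-- After waiting for a fraction of the block slightly larger than `1 - 4p`, the remaining block is
shorter than `4pn`, so by Plotkin's bound typical pairs of suffixes are closer than `2pn`. -/
lemma le_one_sub_card_finalSegment_div (hp : 0 ≤ p) (hε : 0 < ε) (hn : 16 ≤ ε * n)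
    (hℓ : (1 - 4 * p + ε / 2) * n ≤ ℓ) :
    ε / (16 * p + ε) ≤ 1 - #(finalSegment n ℓ) / (2 * (2 * ⌊p * (n : ℝ)⌋₊ + 1 : ℕ)) := by
  set θ := ε / (16 * p + ε)
  have hθ : θ * (16 * p + ε) = ε := div_mul_cancel₀ _ (by positivity)
  have hθ0 : 0 ≤ θ := by positivity
  have hθ1 : θ ≤ 1 := div_le_one_of_le₀ (by linarith) (by positivity)
  rw [le_sub_comm, div_le_iff₀ (by positivity), card_finalSegment]
  push_cast
  rcases le_total n ℓ with hnℓ | hℓn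
  · rw [Nat.sub_eq_zero_of_le hnℓ, Nat.cast_zero]
    exact mul_nonneg (sub_nonneg.mpr hθ1) (by positivity)
  · have hlow := Nat.lt_floor_add_one (p * n : ℝ)
    calc ((n - ℓ : ℕ) : ℝ) ≤ 4 * (p * n) - ε * n / 2 := by
          rw [Nat.cast_sub hℓn]
          linarith
      _ ≤ (1 - θ) * (4 * (p * n) - 2) := by
          nlinarith [mul_nonneg (mul_nonneg hθ0 hε.le) n.cast_nonneg (α := ℝ)]
      _ ≤ (1 - θ) * (2 * (2 * ⌊p * (n : ℝ)⌋₊ + 1)) :=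
          mul_le_mul_of_nonneg_left (by linarith) (sub_nonneg.mpr hθ1)

lemma ProbCode.le_sum_lightMessages {R : ℝ} (C : ProbCode n R) [DecidableEq C.U] {s : ℕ}
    (hε : 0 < ε) (hn : 16 + 4 * s ≤ ε * n) (hℓ : ℓ ≤ (R - ε / 2) * n + 1) :
    ε / 4 ≤ ∑ u ∈ C.lightMessages (finalSegment n ℓ) s, C.pU u := by
  have hn0 : (0 : ℝ) < n := pos_of_mul_pos_right (hn.trans_lt' (by positivity)) hε.le
  have hwait : (#(finalSegment n ℓ)ᶜ : ℝ) ≤ ℓ := by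
    rw [card_compl_finalSegment]
    exact_mod_cast min_le_right n ℓ
  have hrate := C.rate_mul_le (finalSegment n ℓ) s
  refine le_of_mul_le_mul_right ?_ hn0
  linarith

end Parameters

/-- The lower bound does not decay with `n`: the posterior bound `2⁻ˢ` on light messages only has
to be small compared with `ε`, so `s` is independent of `n`. -/
theorem prob_converse_quantitative_general (p ε : ℝ) (hp : 0 ≤ p) (hε : 0 < ε) :
    ∃ c > (0 : ℝ), ∃ N : ℕ, ∀ n ≥ N, ∀ R ≥ max (1 - 4 * p) 0 + ε, ∀ C : ProbCode n R,
      ∃ A : CausalAdversary n p, c ≤ C.errProb A := by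
  classical
  set θ := ε / (16 * p + ε)
  have hθ0 : 0 < θ := by positivity
  obtain ⟨s, hs⟩ := exists_pow_lt_of_lt_one (by positivity : 0 < θ * ε / 8) one_half_lt_one
  refine ⟨θ * ε / 16, by positivity, ⌈(16 + 4 * s) / ε⌉₊, fun n hn R hR C => ?_⟩
  have hlarge : 16 + 4 * s ≤ ε * n := (div_le_iff₀' hε).mp (Nat.ceil_le.mp hn)
  let ℓ := ⌈(max (1 - 4 * p) 0 + ε / 2) * n⌉₊
  have hwait : (1 - 4 * p + ε / 2) * n ≤ ℓ :=
    (Nat.le_ceil _).trans' (by gcongr; exact le_max_left _ _)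
  have hobserve : (ℓ : ℝ) ≤ (R - ε / 2) * n + 1 :=
    (Nat.ceil_lt_add_one (by positivity)).le.trans (by gcongr; linarith)
  obtain ⟨A, hA⟩ := C.exists_le_errProb s (isUpperSet_finalSegment n ℓ)
    (Nat.floor_le (by positivity : 0 ≤ p * n))
  have hclose := le_one_sub_card_finalSegment_div hp hε (by linarith) hwait
  have hmass := C.le_sum_lightMessages hε hlarge hobserve
  rw [one_div, inv_pow] at hs
  refine ⟨A, ?_⟩
  linarith [mul_le_mul hclose hmass (by positivity) (hθ0.le.trans hclose)]

/-- Quantitative form of Theorem 2: for every `p ∈ (0, 1/2]` and `ε > 0` there are a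
constant `c > 0`, an exponent `k`, and `N` such that for every `n ≥ N`, every
probabilistic `(n, Rn)`-code with rate `R = max(1 − 4p, 0) + ε` admits a causal adversary
with power `p` forcing probability of error at least `c · n^{-k}`. -/
theorem prob_converse_quantitative (p ε : ℝ) (hp0 : 0 < p) (hp1 : p ≤ 1 / 2)
    (hε : 0 < ε) :
    ∃ c > (0 : ℝ), ∃ k : ℕ, ∃ N : ℕ, ∀ n ≥ N,
      ∀ C : ProbCode n (max (1 - 4 * p) 0 + ε),
        ∃ A : CausalAdversary n p, c / (n : ℝ) ^ k ≤ C.errProb A := by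
  obtain ⟨c, hc, N, hN⟩ := prob_converse_quantitative_general p ε hp0.le hε
  exact ⟨c, hc, 0, N, fun n hn C => by simpa using hN n hn _ le_rfl C⟩
end
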